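/- Let h ≥ 1, r ≥ 0 with g = h + r ≥ 5. Let A be a finite-order linear automorphism of an h-dimensional complex vector space W whose eigenvalues α₁, …, α_h satisfy the integrality condition, and let B be a finite-order matrix in GL(r, ℤ) with (complex) eigenvalues β₁, …, β_r. Let s denote the induced automorphism of V = Sym²W ⊕ (W ⊗ ℂʳ) acting as Sym²A on the first summand and as A ⊗ B on the second. If s does not have order 1 or 2 (i.e. s² ≠ id_V), then λ_V(s) ≥ 1, where, writing αᵢ = e^{2πi aᵢ} and β_k = e^{2πi b_k} with aᵢ, b_k ∈ [0,1), λ_V(s) = Σ_{1≤i≤j≤h} {aᵢ + aⱼ} + Σ_{1≤i≤h, 1≤k≤r} {aᵢ + b_k} and {x} denotes the fractional part of x. -/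

import Mathlib

open Polynomial

/-- The submodule of `W ⊗ W` generated by `x ⊗ y - y ⊗ x`. -/
noncomputable def SymKer (R M : Type*) [CommRing R] [AddCommGroup M] [Module R M] :
    Submodule R (TensorProduct R M M) :=
  Submodule.span R {z | ∃ x y : M, z = x ⊗ₜ[R] y - y ⊗ₜ[R] x}

/-- The second symmetric power `Sym²M = (M ⊗ M)/⟨x⊗y - y⊗x⟩`. -/
abbrev SymSq (R M : Type*) [CommRing R] [AddCommGroup M] [Module R M] :=
  TensorProduct R M M ⧸ SymKer R M

/-- The automorphism `Sym²f` of `Sym²M` induced by `f : M → M`. -/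
noncomputable def sym2Map {R M : Type*} [CommRing R] [AddCommGroup M] [Module R M]
    (f : M →ₗ[R] M) : SymSq R M →ₗ[R] SymSq R M :=
  Submodule.mapQ (SymKer R M) (SymKer R M) (TensorProduct.map f f) (by
    rw [SymKer, Submodule.span_le]
    rintro z ⟨x, y, rfl⟩
    simp only [SetLike.mem_coe, Submodule.mem_comap, map_sub, TensorProduct.map_tmul]
    exact Submodule.subset_span ⟨f x, f y, rfl⟩)

/-
If some `αᵢ` has order `N ≥ 5`, `N ≠ 6`, integrality provides, up to conjugation, eigenvalues
`e^{2πi/N}` and `e^{2πiu/N}` for a unit `u` mod `N` at distance at most `1` from `N/3`, and the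
three terms of `Sym²A` built from these two already add up to at least `1`. The orders that remain
divide `4` or `6`, so each `{2aᵢ}` is `0` or at least `1/3`. If `{2aᵢ} ≥ 1/3` for some `i`, then
subadditivity of the fractional part, together with the symmetry of the `βₖ` under conjugation,
makes the age at least `(g + 1)/6 ≥ 1`. If every `{2aᵢ}` vanishes, some `βₖ` is not real, and then
`βₖ` and its conjugate contribute a pair `{x} + {-x} = 1` to `W ⊗ ℂʳ`.
-/

/-- `e^{2πix}`, written exactly as the eigenvalues are in the main theorem. -/
noncomputable def expTwoPiI (x : ℝ) : ℂ := Complex.exp (2 * Real.pi * Complex.I * x)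

theorem expTwoPiI_eq_iff {x y : ℝ} : expTwoPiI x = expTwoPiI y ↔ Int.fract x = Int.fract y := by
  rw [expTwoPiI, expTwoPiI, Complex.exp_eq_exp_iff_exists_int, Int.fract_eq_fract]
  refine exists_congr fun n => ?_
  rw [mul_comm (n : ℂ), ← mul_add, mul_right_inj' Complex.two_pi_I_ne_zero, sub_eq_iff_eq_add']
  norm_cast

theorem expTwoPiI_pow (x : ℝ) (n : ℕ) : expTwoPiI x ^ n = expTwoPiI (n * x) := by
  rw [expTwoPiI, expTwoPiI, ← Complex.exp_nat_mul]
  push_cast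
  ring_nf

theorem expTwoPiI_eq_one_iff {x : ℝ} : expTwoPiI x = 1 ↔ Int.fract x = 0 := by
  rw [show (1 : ℂ) = expTwoPiI 0 by simp [expTwoPiI], expTwoPiI_eq_iff, Int.fract_zero]

theorem expTwoPiI_sq_eq_one_iff {x : ℝ} : expTwoPiI x ^ 2 = 1 ↔ Int.fract (2 * x) = 0 := by
  rw [expTwoPiI_pow, expTwoPiI_eq_one_iff, Nat.cast_ofNat]

theorem conj_expTwoPiI (x : ℝ) : starRingEnd ℂ (expTwoPiI x) = expTwoPiI (-x) := by
  simp [expTwoPiI, ← Complex.exp_conj, Complex.conj_ofNat]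

theorem norm_expTwoPiI (x : ℝ) : ‖expTwoPiI x‖ = 1 := by
  simp [expTwoPiI, Complex.norm_exp]

theorem isPrimitiveRoot_expTwoPiI_div {u N : ℕ} (hN : N ≠ 0) (hu : u.Coprime N) :
    IsPrimitiveRoot (expTwoPiI (u / N)) N := by
  simpa [expTwoPiI] using Complex.isPrimitiveRoot_exp_of_coprime u N hN hu

theorem exists_perm_of_prod_X_sub_C_eq {R ι : Type*} [CommRing R] [IsDomain R] [Fintype ι]
    {α β : ι → R} (h : ∏ i, (X - C (α i)) = ∏ i, (X - C (β i))) :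
    ∃ σ : Equiv.Perm ι, ∀ i, β (σ i) = α i := by
  classical
  have hroots (γ : ι → R) : (∏ i, (X - C (γ i))).roots = Finset.univ.val.map γ := by
    rw [← roots_multiset_prod_X_sub_C (Finset.univ.val.map γ), Multiset.map_map]
    rfl
  have hmap : Finset.univ.val.map α = Finset.univ.val.map β := by rw [← hroots, h, hroots]
  have hcard (γ : ι → R) (z : R) :
      Fintype.card {i // γ i = z} = (Finset.univ.val.map γ).count z := by
    rw [Fintype.card_subtype, Multiset.count_map]
    simp only [eq_comm, Finset.card_def, Finset.filter_val]
  have hfiber (z : R) : Nonempty ({i // α i = z} ≃ {i // β i = z}) :=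
    Fintype.card_eq.1 (by rw [hcard, hcard, hmap])
  exact ⟨Equiv.ofFiberEquiv fun z => (hfiber z).some, Equiv.ofFiberEquiv_map _⟩

theorem aeval_eq_zero_of_isPrimitiveRoot {K : Type*} [Field K] [CharZero K]
    {ζ ξ : K} {N : ℕ} (hN : 0 < N) (hζ : IsPrimitiveRoot ζ N) (hξ : IsPrimitiveRoot ξ N)
    {q : ℤ[X]} (hq : aeval ζ q = 0) : aeval ξ q = 0 := by
  have hdvd : minpoly ℤ ξ ∣ q := by
    rw [← cyclotomic_eq_minpoly hξ hN, cyclotomic_eq_minpoly hζ hN]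
    exact minpoly.isIntegrallyClosed_dvd (hζ.isIntegral hN) hq
  exact aeval_eq_zero_of_dvd_aeval_eq_zero hdvd (minpoly.aeval ℤ ξ)

/-- The integrality condition on a family `α₁, …, α_h` of complex numbers, which the eigenvalues on
the tangent space of an automorphism of a principally polarized abelian `h`-fold satisfy. -/
def IntegralityCondition {ι : Type*} [Fintype ι] (α : ι → ℂ) : Prop :=
  ∃ q : ℤ[X], q.map (Int.castRingHom ℂ) =
    ∏ i, (X - C (α i)) * (X - C (starRingEnd ℂ (α i)))

namespace IntegralityCondition

variable {ι : Type*} [Fintype ι] {α : ι → ℂ}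

theorem aeval_eq_prod {q : ℤ[X]}
    (hq : q.map (Int.castRingHom ℂ) = ∏ i, (X - C (α i)) * (X - C (starRingEnd ℂ (α i)))) (z : ℂ) :
    aeval z q = ∏ i, (z - α i) * (z - starRingEnd ℂ (α i)) := by
  rw [← eval_map_algebraMap, algebraMap_int_eq, hq, eval_prod]
  simp only [eval_mul, eval_sub, eval_X, eval_C]

theorem aeval_eq_zero {q : ℤ[X]}
    (hq : q.map (Int.castRingHom ℂ) = ∏ i, (X - C (α i)) * (X - C (starRingEnd ℂ (α i)))) (i : ι) :
    aeval (α i) q = 0 := by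
  rw [aeval_eq_prod hq]
  exact Finset.prod_eq_zero (Finset.mem_univ i) (by rw [sub_self, zero_mul])

theorem exists_eq_or_eq_conj (hα : IntegralityCondition α) {i₀ : ι} {N : ℕ} (hN : 0 < N)
    (hprim : IsPrimitiveRoot (α i₀) N) {ζ : ℂ} (hζ : IsPrimitiveRoot ζ N) :
    ∃ i, α i = ζ ∨ α i = starRingEnd ℂ ζ := by
  obtain ⟨q, hq⟩ := hα
  have hζ0 := aeval_eq_zero_of_isPrimitiveRoot hN hprim hζ (aeval_eq_zero hq i₀)
  rw [aeval_eq_prod hq, Finset.prod_eq_zero_iff] at hζ0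
  obtain ⟨i, -, hi⟩ := hζ0
  rcases mul_eq_zero.1 hi with h | h
  · exact ⟨i, .inl (sub_eq_zero.1 h).symm⟩
  · exact ⟨i, .inr (by rw [sub_eq_zero.1 h, Complex.conj_conj])⟩

theorem exists_isPrimitiveRoot (hα : IntegralityCondition α) (hnorm : ∀ i, ‖α i‖ = 1) (i : ι) :
    ∃ N, 0 < N ∧ IsPrimitiveRoot (α i) N := by
  obtain ⟨q, hq⟩ := hα
  have hmahler : (q.map (Int.castRingHom ℂ)).mahlerMeasure = 1 := by
    rw [hq, Finset.prod_eq_multiset_prod, prod_mahlerMeasure_eq_mahlerMeasure_prod,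
      Multiset.map_map]
    simp [mahlerMeasure_mul, mahlerMeasure_X_sub_C, hnorm]
  have hne : q.map (Int.castRingHom ℂ) ≠ 0 := by
    intro h
    simp [h] at hmahler
  have hroot : α i ∈ q.aroots ℂ := mem_aroots'.2 ⟨hne, aeval_eq_zero hq i⟩
  have hne0 : α i ≠ 0 := norm_ne_zero_iff.1 (by rw [hnorm]; exact one_ne_zero)
  exact isPrimitiveRoot_of_mahlerMeasure_eq_one hmahler hne0 hroot

end IntegralityCondition

section Fract

variable {R : Type*} [Field R] [LinearOrder R] [IsStrictOrderedRing R] [FloorRing R]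

theorem le_fract_of_sub_eq_intCast {x w : R} {n : ℤ} (h : x - w = n) (hw : w < 1) :
    w ≤ Int.fract x := by
  rw [Int.fract_eq_fract.2 ⟨n, h⟩]
  rcases le_or_gt 0 w with h0 | h0
  · exact (Int.fract_eq_self.2 ⟨h0, hw⟩).ge
  · exact h0.le.trans (Int.fract_nonneg w)

theorem fract_eq_zero_or_one_div_le {x : R} {m : ℕ} (hm : 0 < m)
    (hx : Int.fract (m * x) = 0) : Int.fract x = 0 ∨ 1 / m ≤ Int.fract x := by
  have hm' : (0 : R) < m := by exact_mod_cast hm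
  obtain ⟨z, hz⟩ := Int.fract_eq_zero_iff.1 hx
  have hk : m * Int.fract x = (z - m * ⌊x⌋ : ℤ) := by
    rw [Int.fract, mul_sub, ← hz]
    push_cast
    ring
  rcases (Int.fract_nonneg x).eq_or_lt with h0 | h0
  · exact .inl h0.symm
  · right
    have hpos : (0 : R) < (z - m * ⌊x⌋ : ℤ) := hk ▸ mul_pos hm' h0
    rw [div_le_iff₀' hm', hk]
    exact_mod_cast Int.cast_pos.1 hpos

theorem one_le_fract_two_mul_add {x y ε t : R} (hx : Int.fract x = ε ∨ Int.fract x = 1 - ε)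
    (hy : Int.fract y = t ∨ Int.fract y = 1 - t) (hε : 0 < ε) (hεt : ε < t) (ht : 2 * t + ε ≤ 1)
    (hlow : 1 ≤ 3 * t + 3 * ε) (hupp : 3 * t ≤ 1 + 3 * ε) :
    1 ≤ Int.fract (2 * x) + (Int.fract (x + y) + Int.fract (2 * y)) := by
  have htwo {z : R} (w : R) (k : ℤ) (hw : 2 * Int.fract z - k = w) (hw1 : w < 1) :
      w ≤ Int.fract (2 * z) :=
    le_fract_of_sub_eq_intCast (n := 2 * ⌊z⌋ + k)
      (by push_cast; linarith [Int.floor_add_fract z]) hw1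
  have hadd (w : R) (k : ℤ) (hw : Int.fract x + Int.fract y - k = w) (hw1 : w < 1) :
      w ≤ Int.fract (x + y) :=
    le_fract_of_sub_eq_intCast (n := ⌊x⌋ + ⌊y⌋ + k)
      (by push_cast; linarith [Int.floor_add_fract x, Int.floor_add_fract y]) hw1
  have h2x : Int.fract x = ε → 2 * ε ≤ Int.fract (2 * x) := fun h =>
    htwo _ 0 (by push_cast; linarith) (by linarith)
  have h2x' : Int.fract x = 1 - ε → 1 - 2 * ε ≤ Int.fract (2 * x) := fun h =>
    htwo _ 1 (by push_cast; linarith) (by linarith)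
  have h2y : Int.fract y = t → 2 * t ≤ Int.fract (2 * y) := fun h =>
    htwo _ 0 (by push_cast; linarith) (by linarith)
  have h2y' : Int.fract y = 1 - t → 1 - 2 * t ≤ Int.fract (2 * y) := fun h =>
    htwo _ 1 (by push_cast; linarith) (by linarith)
  rcases hx with hx | hx <;> rcases hy with hy | hy
  · linarith [h2x hx, h2y hy, hadd (ε + t) 0 (by push_cast; linarith) (by linarith)]
  · linarith [h2x hx, h2y' hy, hadd (1 - t + ε) 0 (by push_cast; linarith) (by linarith)]
  · linarith [h2x' hx, h2y hy, hadd (t - ε) 1 (by push_cast; linarith) (by linarith)]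
  · linarith [h2x' hx, h2y' hy, hadd (1 - t - ε) 1 (by push_cast; linarith) (by linarith)]

theorem one_sixth_le_fract_add {x y : R} (hx : 1 / 3 ≤ Int.fract (2 * x))
    (hy : Int.fract (2 * y) = 0 ∨ 1 / 3 ≤ Int.fract (2 * y)) :
    1 / 6 ≤ Int.fract (x + y) + Int.fract (2 * y) := by
  rcases hy with hy | hy
  · obtain ⟨z, hz⟩ := Int.fract_eq_zero_iff.1 hy
    have hxy : Int.fract (2 * x) = Int.fract ((x + y) + (x + y)) :=
      Int.fract_eq_fract.2 ⟨-z, by push_cast; linarith⟩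
    linarith [Int.fract_add_le (x + y) (x + y)]
  · linarith [Int.fract_nonneg (x + y)]

end Fract

theorem exists_coprime_near_third {N : ℕ} (hN : 5 ≤ N) (h6 : N ≠ 6) :
    ∃ u : ℕ, u.Coprime N ∧ 1 < u ∧ 2 * u < N ∧ N ≤ 3 * u + 3 ∧ 3 * u ≤ N + 3 := by
  obtain ⟨k, rfl | rfl | rfl⟩ : ∃ k, N = 3 * k ∨ N = 3 * k + 1 ∨ N = 3 * k + 2 :=
    ⟨N / 3, by omega⟩
  · have hcop {u : ℕ} (h3 : ¬ 3 ∣ u) (hu : u.Coprime k) : u.Coprime (3 * k) :=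
      (Nat.prime_three.coprime_iff_not_dvd.2 h3).symm.mul_right hu
    by_cases h3 : 3 ∣ k + 1
    · obtain ⟨l, rfl⟩ : ∃ l, k = l + 1 := ⟨k - 1, by omega⟩
      exact ⟨l, hcop (by omega) (by simp), by omega, by omega, by omega, by omega⟩
    · exact ⟨k + 1, hcop h3 (by simp), by omega, by omega, by omega, by omega⟩
  · exact ⟨k, by simp, by omega, by omega, by omega, by omega⟩
  · refine ⟨k + 1, ?_, by omega, by omega, by omega, by omega⟩
    rw [show 3 * k + 2 = 2 * (k + 1) + k by ring]
    simp

section SymSqAge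

variable {ι : Type*} [Fintype ι] [LinearOrder ι]

/-- The age of `Sym²A`, for `A` with eigenvalues `e^{2πi aᵢ}`. -/
noncomputable def symSqAge (a : ι → ℝ) : ℝ :=
  ∑ p ∈ Finset.univ.filter (fun p : ι × ι => p.1 ≤ p.2), Int.fract (a p.1 + a p.2)

theorem add_sum_row_add_diag_le_sum_filter_le {M : Type*} [AddCommMonoid M] [PartialOrder M]
    [IsOrderedAddMonoid M] {f : ι → ι → M} (hf : ∀ i j, 0 ≤ f i j)
    (hsymm : ∀ i j, f i j = f j i) (i₀ : ι) :
    f i₀ i₀ + ∑ j ∈ Finset.univ.erase i₀, (f i₀ j + f j j) ≤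
      ∑ p ∈ Finset.univ.filter (fun p : ι × ι => p.1 ≤ p.2), f p.1 p.2 := by
  let row (j : ι) : ι × ι := (min i₀ j, max i₀ j)
  have hrow : Function.Injective row := by
    intro j k h
    simp only [row, Prod.mk.injEq] at h
    grind
  have hdisj : Disjoint Finset.univ.diag ((Finset.univ.erase i₀).image row) := by
    rw [Finset.disjoint_right]
    intro p hp
    obtain ⟨j, hj, rfl⟩ := Finset.mem_image.1 hp
    simpa [row, eq_comm] using hj
  have hsub : Finset.univ.diag ∪ (Finset.univ.erase i₀).image row ⊆
      Finset.univ.filter (fun p : ι × ι => p.1 ≤ p.2) := by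
    intro p hp
    rcases Finset.mem_union.1 hp with hp | hp
    · simpa using (Finset.mem_diag.1 hp).2.le
    · obtain ⟨j, -, rfl⟩ := Finset.mem_image.1 hp
      simp [row]
  have hsum : ∑ p ∈ (Finset.univ.erase i₀).image row, f p.1 p.2 =
      ∑ j ∈ Finset.univ.erase i₀, f i₀ j := by
    rw [Finset.sum_image hrow.injOn]
    refine Finset.sum_congr rfl fun j _ => ?_
    rcases le_total i₀ j with h | h <;> simp [row, h, hsymm]
  calc f i₀ i₀ + ∑ j ∈ Finset.univ.erase i₀, (f i₀ j + f j j)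
      = ∑ p ∈ Finset.univ.diag ∪ (Finset.univ.erase i₀).image row, f p.1 p.2 := by
        rw [Finset.sum_union hdisj, hsum, Finset.sum_diag, Finset.sum_add_distrib,
          ← Finset.add_sum_erase _ _ (Finset.mem_univ i₀)]
        abel
    _ ≤ _ := Finset.sum_le_sum_of_subset_of_nonneg hsub fun p _ _ => hf p.1 p.2

theorem fract_two_mul_add_sum_row_le_symSqAge (a : ι → ℝ) (i₀ : ι) :
    Int.fract (2 * a i₀) +
        ∑ j ∈ Finset.univ.erase i₀, (Int.fract (a i₀ + a j) + Int.fract (2 * a j)) ≤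
      symSqAge a := by
  simpa only [two_mul, symSqAge] using add_sum_row_add_diag_le_sum_filter_le
    (f := fun i j => Int.fract (a i + a j)) (fun _ _ => Int.fract_nonneg _)
    (fun i j => by rw [add_comm]) i₀

theorem fract_pair_le_symSqAge (a : ι → ℝ) {i j : ι} (hij : i ≠ j) :
    Int.fract (2 * a i) + (Int.fract (a i + a j) + Int.fract (2 * a j)) ≤ symSqAge a := by
  refine le_trans ?_ (fract_two_mul_add_sum_row_le_symSqAge a i)
  gcongr
  exact Finset.single_le_sum (f := fun j => Int.fract (a i + a j) + Int.fract (2 * a j))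
    (fun _ _ => add_nonneg (Int.fract_nonneg _) (Int.fract_nonneg _))
    (Finset.mem_erase.2 ⟨hij.symm, Finset.mem_univ j⟩)

theorem symSqAge_nonneg (a : ι → ℝ) : 0 ≤ symSqAge a :=
  Finset.sum_nonneg fun _ _ => Int.fract_nonneg _

theorem card_add_one_div_six_le_symSqAge {a : ι → ℝ}
    (ha : ∀ i, Int.fract (2 * a i) = 0 ∨ 1 / 3 ≤ Int.fract (2 * a i)) {i₀ : ι}
    (hi₀ : Int.fract (2 * a i₀) ≠ 0) : ((Fintype.card ι : ℝ) + 1) / 6 ≤ symSqAge a := by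
  have hthird : 1 / 3 ≤ Int.fract (2 * a i₀) := (ha i₀).resolve_left hi₀
  have hrow : (Finset.univ.erase i₀).card • (1 / 6 : ℝ) ≤
      ∑ j ∈ Finset.univ.erase i₀, (Int.fract (a i₀ + a j) + Int.fract (2 * a j)) :=
    Finset.card_nsmul_le_sum _ _ _ fun j _ => one_sixth_le_fract_add hthird (ha j)
  have hcard : ((Finset.univ.erase i₀).card : ℝ) = Fintype.card ι - 1 := by
    rw [Finset.cast_card_erase_of_mem (Finset.mem_univ i₀), Finset.card_univ]
  rw [nsmul_eq_mul, hcard] at hrow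
  linarith [fract_two_mul_add_sum_row_le_symSqAge a i₀]

end SymSqAge

section TensorAge

variable {ι κ : Type*} [Fintype ι] [Fintype κ]

/-- The age of `A ⊗ B`, for `A` and `B` with eigenvalues `e^{2πi aᵢ}` and `e^{2πi bₖ}`. -/
noncomputable def tensorAge (a : ι → ℝ) (b : κ → ℝ) : ℝ :=
  ∑ i, ∑ k, Int.fract (a i + b k)

theorem sum_fract_add_le_tensorAge (a : ι → ℝ) (b : κ → ℝ) (i : ι) :
    ∑ k, Int.fract (a i + b k) ≤ tensorAge a b :=
  Finset.single_le_sum (f := fun i => ∑ k, Int.fract (a i + b k))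
    (fun _ _ => Finset.sum_nonneg fun _ _ => Int.fract_nonneg _) (Finset.mem_univ i)

theorem tensorAge_nonneg (a : ι → ℝ) (b : κ → ℝ) : 0 ≤ tensorAge a b :=
  Finset.sum_nonneg fun _ _ => Finset.sum_nonneg fun _ _ => Int.fract_nonneg _

theorem card_mul_fract_two_mul_le_two_mul_sum {b : κ → ℝ} {σ : Equiv.Perm κ}
    (hσ : ∀ k, Int.fract (b (σ k)) = Int.fract (-b k)) (x : ℝ) :
    Fintype.card κ * Int.fract (2 * x) ≤ 2 * ∑ k, Int.fract (x + b k) := by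
  have hneg (k : κ) : Int.fract (x + b (σ k)) = Int.fract (x - b k) := by
    obtain ⟨z, hz⟩ := Int.fract_eq_fract.1 (hσ k)
    exact Int.fract_eq_fract.2 ⟨z, by linarith⟩
  calc Fintype.card κ * Int.fract (2 * x) = ∑ k : κ, Int.fract ((x + b k) + (x - b k)) := by
        simp [two_mul]
    _ ≤ ∑ k, (Int.fract (x + b k) + Int.fract (x - b k)) :=
        Finset.sum_le_sum fun k _ => Int.fract_add_le _ _
    _ = 2 * ∑ k, Int.fract (x + b k) := by
        simp only [← hneg, Finset.sum_add_distrib]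
        rw [Equiv.sum_comp σ fun k => Int.fract (x + b k), two_mul]

theorem one_le_tensorAge {a : ι → ℝ} {i : ι} (hi : Int.fract (2 * a i) = 0) {b : κ → ℝ}
    {k l : κ} (hl : Int.fract (b l) = Int.fract (-b k)) (hk : Int.fract (2 * b k) ≠ 0) :
    1 ≤ tensorAge a b := by
  obtain ⟨z, hz⟩ := Int.fract_eq_zero_iff.1 hi
  obtain ⟨w, hw⟩ := Int.fract_eq_fract.1 hl
  have hkl : k ≠ l := by
    rintro rfl
    exact hk (Int.fract_eq_zero_iff.2 ⟨w, by linarith⟩)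
  have hne : Int.fract (a i + b k) ≠ 0 := by
    intro h0
    obtain ⟨y, hy⟩ := Int.fract_eq_zero_iff.1 h0
    exact hk (Int.fract_eq_zero_iff.2 ⟨2 * y - z, by push_cast; linarith⟩)
  have hneg : Int.fract (a i + b l) = 1 - Int.fract (a i + b k) := by
    rw [← Int.fract_neg hne]
    exact Int.fract_eq_fract.2 ⟨z + w, by push_cast; linarith⟩
  calc (1 : ℝ) = Int.fract (a i + b k) + Int.fract (a i + b l) := by rw [hneg]; ring
    _ ≤ ∑ k, Int.fract (a i + b k) :=
        Finset.add_le_sum (f := fun k => Int.fract (a i + b k))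
          (fun _ _ => Int.fract_nonneg _) (Finset.mem_univ k) (Finset.mem_univ l) hkl
    _ ≤ tensorAge a b := sum_fract_add_le_tensorAge a b i

end TensorAge

theorem fract_two_mul_eq_zero_or_one_third_le {x : ℝ} {N : ℕ}
    (hx : IsPrimitiveRoot (expTwoPiI x) N) (hN : N ∣ 4 ∨ N ∣ 6) :
    Int.fract (2 * x) = 0 ∨ 1 / 3 ≤ Int.fract (2 * x) := by
  have hdiv {m : ℕ} (hm : 0 < m) (hm3 : m ≤ 3) (hNm : N ∣ m * 2) :
      Int.fract (2 * x) = 0 ∨ 1 / 3 ≤ Int.fract (2 * x) := by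
    have hpow := (hx.pow_eq_one_iff_dvd _).2 hNm
    rw [expTwoPiI_pow, expTwoPiI_eq_one_iff] at hpow
    push_cast at hpow
    rw [mul_assoc] at hpow
    refine (fract_eq_zero_or_one_div_le hm hpow).imp_right (le_trans ?_)
    gcongr
    exact_mod_cast hm3
  rcases hN with hN | hN
  · exact hdiv (m := 2) two_pos (by norm_num) hN
  · exact hdiv (m := 3) three_pos le_rfl hN

namespace IntegralityCondition

variable {ι : Type*} [Fintype ι] {a : ι → ℝ}

theorem exists_fract_eq_div (ha : IntegralityCondition fun i => expTwoPiI (a i)) {i₀ : ι} {N : ℕ}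
    (hprim : IsPrimitiveRoot (expTwoPiI (a i₀)) N) {u : ℕ} (hu : u.Coprime N) (hu0 : 0 < u)
    (huN : u < N) :
    ∃ i, Int.fract (a i) = u / N ∨ Int.fract (a i) = 1 - u / N := by
  have hN : 0 < N := hu0.trans huN
  have hfract : Int.fract (u / N : ℝ) = u / N :=
    Int.fract_eq_self.2 ⟨by positivity, (div_lt_one (by positivity)).2 (by exact_mod_cast huN)⟩
  have hne : Int.fract (u / N : ℝ) ≠ 0 := by
    rw [hfract]
    positivity
  obtain ⟨i, hi⟩ := ha.exists_eq_or_eq_conj hN hprim (isPrimitiveRoot_expTwoPiI_div hN.ne' hu)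
  rw [conj_expTwoPiI, expTwoPiI_eq_iff, expTwoPiI_eq_iff, Int.fract_neg hne, hfract] at hi
  exact ⟨i, hi⟩

theorem one_le_symSqAge [LinearOrder ι] (ha : IntegralityCondition fun i => expTwoPiI (a i))
    {i₀ : ι} {N : ℕ} (hprim : IsPrimitiveRoot (expTwoPiI (a i₀)) N) (hN : 5 ≤ N) (h6 : N ≠ 6) :
    1 ≤ symSqAge a := by
  obtain ⟨u, hu, h1u, huN, hlow, hupp⟩ := exists_coprime_near_third hN h6
  obtain ⟨i, hi⟩ := ha.exists_fract_eq_div hprim (Nat.coprime_one_left N) one_pos (by omega)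
  obtain ⟨j, hj⟩ := ha.exists_fract_eq_div hprim hu (by omega) (by omega)
  rw [Nat.cast_one] at hi
  have hN0 : (0 : ℝ) < N := by positivity
  have hlt : (1 / N : ℝ) < u / N := by
    gcongr
    exact_mod_cast h1u
  have hhalf : 2 * (u / N : ℝ) + 1 / N ≤ 1 := by
    field_simp
    exact_mod_cast huN
  have hlow' : 1 ≤ 3 * (u / N : ℝ) + 3 * (1 / N) := by
    field_simp
    exact_mod_cast hlow
  have hupp' : 3 * (u / N : ℝ) ≤ 1 + 3 * (1 / N) := by
    field_simp
    exact_mod_cast hupp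
  have hε : (0 : ℝ) < 1 / N := by positivity
  have hij : i ≠ j := by
    rintro rfl
    rcases hi with hi | hi <;> rcases hj with hj | hj <;> linarith
  exact (one_le_fract_two_mul_add hi hj hε hlt hhalf hlow' hupp').trans
    (fract_pair_le_symSqAge a hij)

theorem one_le_symSqAge_or_one_third_le [LinearOrder ι]
    (ha : IntegralityCondition fun i => expTwoPiI (a i)) :
    1 ≤ symSqAge a ∨ ∀ i, Int.fract (2 * a i) = 0 ∨ 1 / 3 ≤ Int.fract (2 * a i) := by
  by_contra! ⟨hlt, i, hi0, hi⟩
  obtain ⟨N, hN, hprim⟩ := ha.exists_isPrimitiveRoot (fun i => norm_expTwoPiI (a i)) i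
  have hsmall : N ∣ 4 ∨ N ∣ 6 := by
    by_contra hdvd
    refine hlt.not_ge (ha.one_le_symSqAge hprim ?_ (by rintro rfl; simp at hdvd))
    by_contra! hN5
    interval_cases N <;> revert hdvd <;> decide
  rcases fract_two_mul_eq_zero_or_one_third_le hprim hsmall with h | h
  · exact hi0 h
  · exact hi.not_ge h

end IntegralityCondition

theorem one_le_symSqAge_add_tensorAge {ι κ : Type*} [Fintype ι] [LinearOrder ι] [Nonempty ι]
    [Fintype κ] (hcard : 5 ≤ Fintype.card ι + Fintype.card κ) {a : ι → ℝ} {b : κ → ℝ}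
    (ha : IntegralityCondition fun i => expTwoPiI (a i)) {σ : Equiv.Perm κ}
    (hσ : ∀ k, Int.fract (b (σ k)) = Int.fract (-b k))
    (hne : ¬ ((∀ i, Int.fract (2 * a i) = 0) ∧ ∀ k, Int.fract (2 * b k) = 0)) :
    1 ≤ symSqAge a + tensorAge a b := by
  rcases ha.one_le_symSqAge_or_one_third_le with hsym | hthird
  · exact le_add_of_le_of_nonneg hsym (tensorAge_nonneg a b)
  by_cases ha2 : ∀ i, Int.fract (2 * a i) = 0
  · obtain ⟨k, hk⟩ : ∃ k, Int.fract (2 * b k) ≠ 0 := by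
      simpa only [ha2, implies_true, true_and, not_forall] using hne
    exact le_add_of_nonneg_of_le (symSqAge_nonneg a)
      (one_le_tensorAge (ha2 (Classical.arbitrary ι)) (hσ k) hk)
  · obtain ⟨i, hi⟩ := not_forall.1 ha2
    have hsym : ((Fintype.card ι : ℝ) + 1) / 6 ≤ symSqAge a :=
      card_add_one_div_six_le_symSqAge hthird hi
    have htensor : (Fintype.card κ : ℝ) / 6 ≤ tensorAge a b := by
      have hmul : (Fintype.card κ : ℝ) * (1 / 3) ≤ Fintype.card κ * Int.fract (2 * a i) := by
        gcongr
        exact (hthird i).resolve_left hi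
      linarith [card_mul_fract_two_mul_le_two_mul_sum hσ (a i), sum_fract_add_le_tensorAge a b i]
    have hcard' : (5 : ℝ) ≤ Fintype.card ι + Fintype.card κ := by exact_mod_cast hcard
    linarith

section LinearAlgebra

theorem isSemisimple_of_pow_eq_one {K V : Type*} [Field K] [AddCommGroup V] [Module K V]
    {f : Module.End K V} {n : ℕ} (hn : (n : K) ≠ 0) (hf : f ^ n = 1) : f.IsSemisimple := by
  refine Module.End.isSemisimple_of_squarefree_aeval_eq_zero
    (separable_X_pow_sub_C (1 : K) hn one_ne_zero).squarefree ?_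
  simp [hf]

theorem aeval_eq_zero_of_isSemisimple {K V : Type*} [Field K] [IsAlgClosed K] [AddCommGroup V]
    [Module K V] [FiniteDimensional K V] {f : Module.End K V} (hf : f.IsSemisimple) {p : K[X]}
    (hp : ∀ μ, f.HasEigenvalue μ → p.IsRoot μ) : aeval f p = 0 := by
  rcases eq_or_ne p 0 with rfl | hp0
  · exact map_zero _
  have hsep : (minpoly K f).Separable :=
    PerfectField.separable_iff_squarefree.2 hf.minpoly_squarefree
  have hroots : (minpoly K f).roots ≤ p.roots := by
    rw [Multiset.le_iff_subset (nodup_roots hsep)]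
    intro μ hμ
    exact (mem_roots hp0).2 (hp μ (Module.End.hasEigenvalue_iff_isRoot.2 (isRoot_of_mem_roots hμ)))
  exact minpoly.dvd_iff.1
    ((IsAlgClosed.splits _).dvd_of_roots_le_roots (minpoly.ne_zero_of_finite K f) hroots)

theorem comp_self_eq_id_of_charpoly_eq_prod {K V ι : Type*} [Field K] [IsAlgClosed K]
    [AddCommGroup V] [Module K V] [FiniteDimensional K V] [Fintype ι] {f : Module.End K V}
    (hf : f.IsSemisimple) {c : ι → K} (hc : f.charpoly = ∏ i, (X - C (c i)))
    (hsq : ∀ i, c i ^ 2 = 1) : f ∘ₗ f = LinearMap.id := by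
  have haeval : aeval f (X ^ 2 - 1 : K[X]) = 0 := by
    refine aeval_eq_zero_of_isSemisimple hf fun μ hμ => ?_
    rw [Module.End.hasEigenvalue_iff_isRoot_charpoly, hc, IsRoot.def, eval_prod,
      Finset.prod_eq_zero_iff] at hμ
    obtain ⟨i, -, hi⟩ := hμ
    obtain rfl : μ = c i := by simpa [sub_eq_zero] using hi
    simp [hsq i]
  simpa [sub_eq_zero, sq, Module.End.mul_eq_comp, Module.End.one_eq_id] using haeval

section SymSq

variable {R M : Type*} [CommRing R] [AddCommGroup M] [Module R M]

theorem sym2Map_id : sym2Map (LinearMap.id : M →ₗ[R] M) = LinearMap.id := by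
  apply Submodule.linearMap_qext
  ext x
  simp [sym2Map]

theorem sym2Map_comp (f g : M →ₗ[R] M) : sym2Map (f ∘ₗ g) = sym2Map f ∘ₗ sym2Map g := by
  apply Submodule.linearMap_qext
  ext x
  simp [sym2Map]

theorem prodMap_sym2Map_map_comp_self_eq_id {N : Type*} [AddCommGroup N] [Module R N]
    {f : M →ₗ[R] M} {g : N →ₗ[R] N} (hf : f ∘ₗ f = LinearMap.id) (hg : g ∘ₗ g = LinearMap.id) :
    (sym2Map f).prodMap (TensorProduct.map f g) ∘ₗ (sym2Map f).prodMap (TensorProduct.map f g) =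
      LinearMap.id := by
  rw [LinearMap.prodMap_comp, ← sym2Map_comp, ← TensorProduct.map_comp, hf, hg, sym2Map_id,
    TensorProduct.map_id, LinearMap.prodMap_id]

end SymSq

end LinearAlgebra

theorem exists_perm_fract_eq_fract_neg {κ : Type*} [Fintype κ] {b : κ → ℝ} {p : ℂ[X]}
    (hp : p = ∏ k, (X - C (expTwoPiI (b k)))) (hreal : p.map (starRingEnd ℂ) = p) :
    ∃ σ : Equiv.Perm κ, ∀ k, Int.fract (b (σ k)) = Int.fract (-b k) := by
  have hprod : ∏ k, (X - C (expTwoPiI (-b k))) = ∏ k, (X - C (expTwoPiI (b k))) := by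
    rw [← hp, ← hreal, hp, Polynomial.map_prod]
    simp only [Polynomial.map_sub, map_X, map_C, conj_expTwoPiI]
  obtain ⟨σ, hσ⟩ := exists_perm_of_prod_X_sub_C_eq hprod
  exact ⟨σ, fun k => expTwoPiI_eq_iff.1 (hσ k)⟩

theorem age_ge_one_of_not_order_two_general {ι κ : Type*} [Fintype ι] [LinearOrder ι] [Nonempty ι]
    [Fintype κ] (hcard : 5 ≤ Fintype.card ι + Fintype.card κ)
    {W U : Type*} [AddCommGroup W] [Module ℂ W] [FiniteDimensional ℂ W]
    [AddCommGroup U] [Module ℂ U] [FiniteDimensional ℂ U]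
    {A : Module.End ℂ W} (hA : A.IsSemisimple) {a : ι → ℝ}
    (heigA : A.charpoly = ∏ i, (X - C (expTwoPiI (a i))))
    (hint : IntegralityCondition fun i => expTwoPiI (a i))
    {B : Module.End ℂ U} (hB : B.IsSemisimple) {b : κ → ℝ}
    (heigB : B.charpoly = ∏ k, (X - C (expTwoPiI (b k))))
    (hreal : B.charpoly.map (starRingEnd ℂ) = B.charpoly)
    (hs : (sym2Map A).prodMap (TensorProduct.map A B) ∘ₗ
      (sym2Map A).prodMap (TensorProduct.map A B) ≠ LinearMap.id) :
    1 ≤ symSqAge a + tensorAge a b := by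
  obtain ⟨σ, hσ⟩ := exists_perm_fract_eq_fract_neg heigB hreal
  refine one_le_symSqAge_add_tensorAge hcard hint hσ fun ⟨ha, hb⟩ => hs ?_
  have hA2 : A ∘ₗ A = LinearMap.id :=
    comp_self_eq_id_of_charpoly_eq_prod hA heigA fun i => expTwoPiI_sq_eq_one_iff.2 (ha i)
  have hB2 : B ∘ₗ B = LinearMap.id :=
    comp_self_eq_id_of_charpoly_eq_prod hB heigB fun k => expTwoPiI_sq_eq_one_iff.2 (hb k)
  exact prodMap_sym2Map_map_comp_self_eq_id hA2 hB2

theorem charpoly_map_intCast_map {R S κ : Type*} [CommRing R] [CommRing S] [Fintype κ]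
    [DecidableEq κ] (B : Matrix κ κ ℤ) (φ : R →+* S) :
    (B.map (Int.cast : ℤ → R)).charpoly.map φ = (B.map (Int.cast : ℤ → S)).charpoly := by
  rw [← Matrix.charpoly_map, Matrix.map_map]
  congr 2
  exact funext fun n => map_intCast φ n

theorem toLin'_map_intCast_pow_eq_one {R κ : Type*} [CommRing R] [Fintype κ] [DecidableEq κ]
    {B : Matrix κ κ ℤ} {m : ℕ} (hB : B ^ m = 1) :
    (Matrix.toLin' (B.map (Int.cast : ℤ → R)) : Module.End R (κ → R)) ^ m = 1 := by
  have hmap : B.map (Int.cast : ℤ → R) ^ m = 1 := by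
    change (Int.castRingHom R).mapMatrix B ^ m = 1
    rw [← map_pow, hB, map_one]
  rw [← Matrix.toLin'_pow, hmap, Matrix.toLin'_one, Module.End.one_eq_id]

/-- Let `h ≥ 1`, `r ≥ 0`, `g = h + r ≥ 5`.  Let `A` be a finite-order automorphism of an
`h`-dimensional complex vector space `W` whose eigenvalues `αᵢ = e^{2πi aᵢ}` (`aᵢ ∈ [0,1)`)
satisfy the integrality condition, and let `B ∈ GL(r,ℤ)` be of finite order, with complex
eigenvalues `βₖ = e^{2πi bₖ}` (`bₖ ∈ [0,1)`).  Let `s` be the induced automorphism of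
`V = Sym²W ⊕ (W ⊗ ℂʳ)`, acting as `Sym²A` on the first summand and as `A ⊗ B` on the
second.  If `s² ≠ id_V`, then
`λ_V(s) = Σ_{i ≤ j} {aᵢ + aⱼ} + Σ_{i,k} {aᵢ + bₖ} ≥ 1`. -/
theorem age_ge_one_of_not_order_two
    (h r : ℕ) (hh : 1 ≤ h) (hg : 5 ≤ h + r)
    (W : Type*) [AddCommGroup W] [Module ℂ W] [FiniteDimensional ℂ W]
    (hW : Module.finrank ℂ W = h)
    (A : Module.End ℂ W) (n : ℕ) (hn : 0 < n) (hA : A ^ n = 1)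
    (a : Fin h → ℝ) (ha : ∀ i, a i ∈ Set.Ico (0 : ℝ) 1)
    (heigA : LinearMap.charpoly A =
      ∏ i, (X - C (Complex.exp (2 * Real.pi * Complex.I * (a i)))))
    (hint : ∃ q : Polynomial ℤ, q.map (Int.castRingHom ℂ) =
      ∏ i, (X - C (Complex.exp (2 * Real.pi * Complex.I * (a i)))) *
        (X - C (starRingEnd ℂ (Complex.exp (2 * Real.pi * Complex.I * (a i))))))
    (B : Matrix (Fin r) (Fin r) ℤ) (m : ℕ) (hm : 0 < m) (hB : B ^ m = 1)
    (b : Fin r → ℝ) (hb : ∀ k, b k ∈ Set.Ico (0 : ℝ) 1)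
    (heigB : (B.map (Int.cast : ℤ → ℂ)).charpoly =
      ∏ k, (X - C (Complex.exp (2 * Real.pi * Complex.I * (b k)))))
    -- `s` is the induced endomorphism of `V = Sym²W ⊕ (W ⊗ ℂʳ)`:
    (s : (SymSq ℂ W × TensorProduct ℂ W (Fin r → ℂ)) →ₗ[ℂ]
      (SymSq ℂ W × TensorProduct ℂ W (Fin r → ℂ)))
    (hs : s = LinearMap.prodMap (sym2Map A)
      (TensorProduct.map A (Matrix.toLin' (B.map (Int.cast : ℤ → ℂ)))))
    (hs2 : s ∘ₗ s ≠ LinearMap.id) :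
    1 ≤ (∑ p ∈ Finset.univ.filter (fun p : Fin h × Fin h => p.1 ≤ p.2),
          Int.fract (a p.1 + a p.2)) +
        ∑ i : Fin h, ∑ k : Fin r, Int.fract (a i + b k) := by
  have : Nonempty (Fin h) := ⟨⟨0, hh⟩⟩
  have hAss : A.IsSemisimple := isSemisimple_of_pow_eq_one (Nat.cast_ne_zero.2 hn.ne') hA
  have hBss : Module.End.IsSemisimple (Matrix.toLin' (B.map (Int.cast : ℤ → ℂ))) :=
    isSemisimple_of_pow_eq_one (Nat.cast_ne_zero.2 hm.ne') (toLin'_map_intCast_pow_eq_one hB)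
  subst hs
  exact age_ge_one_of_not_order_two_general (by simpa using hg) hAss heigA hint hBss
    ((Matrix.charpoly_toLin' _).trans heigB)
    (by rw [Matrix.charpoly_toLin', charpoly_map_intCast_map]) hs2
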